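/- For every real number q > 1, ∫₀¹ (x^{q-2} + 1)·log(x^q + 1)/(x^q + 1) dx = (1/(4q))·(ψ'((2q-1)/(2q)) − ψ'((q-1)/(2q))) − (π/(q·sin(π/q)))·(ψ(1 − 1/q) − ψ(1)). -/

import Mathlib

/-- The digamma function ψ(x) = Γ'(x)/Γ(x). -/
noncomputable def digamma (x : ℝ) : ℝ := deriv Real.Gamma x / Real.Gamma x

/-- The trigamma function ψ'(x), the derivative of the digamma function. -/
noncomputable def trigamma (x : ℝ) : ℝ := deriv digamma x

/-!
Put `g x = log (x ^ q + 1) / (x ^ q + 1)`. Since `log (x⁻¹ ^ q + 1) = log (x ^ q + 1) - q * log x`,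
the summand with the factor `x ^ (q - 2)` is `x⁻² * g x⁻¹ + q * log x * x ^ (q - 2) / (x ^ q + 1)`,
and `x ↦ x⁻¹` turns `x⁻² * g x⁻¹` into the tail of `∫ g` over `(1, ∞)`. The integral is therefore
`∫₀^∞ g` plus `q * ∫₀¹ log x * x ^ (q - 2) / (x ^ q + 1)`. The former is minus the derivative at
`s = 1` of `∫₀^∞ (x ^ q + 1) ^ (-s) = B(1/q, s - 1/q) / q`, which produces the digamma values; the
latter is an alternating series of inverse squares by expanding `1 / (1 + x ^ q)` geometrically,
which produces the trigamma values.
-/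

open Filter MeasureTheory ProbabilityTheory Set Topology

section Digamma

variable {x y : ℝ}

lemma hasDerivAt_Gamma (hx : 0 < x) : HasDerivAt Real.Gamma (digamma x * Real.Gamma x) x := by
  rw [digamma, div_mul_cancel₀ _ (Real.Gamma_pos_of_pos hx).ne']
  exact (Real.differentiableOn_Gamma_Ioi.differentiableAt (Ioi_mem_nhds hx)).hasDerivAt

lemma hasDerivAt_log_Gamma (hx : 0 < x) :
    HasDerivAt (fun t => Real.log (Real.Gamma t)) (digamma x) x := by
  have hΓ := (Real.Gamma_pos_of_pos hx).ne'
  simpa [hΓ] using (hasDerivAt_Gamma hx).log hΓ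

lemma digamma_add_one (hx : 0 < x) : digamma (x + 1) = digamma x + 1 / x := by
  have h_shift : HasDerivAt (fun t => Real.log (Real.Gamma (t + 1))) (digamma (x + 1)) x :=
    (hasDerivAt_log_Gamma (by positivity)).comp_add_const x 1
  have h_sum : HasDerivAt (fun t => Real.log t + Real.log (Real.Gamma t)) (1 / x + digamma x) x :=
    (one_div x ▸ Real.hasDerivAt_log hx.ne').add (hasDerivAt_log_Gamma hx)
  have h_eq : (fun t => Real.log (Real.Gamma (t + 1))) =ᶠ[𝓝 x]
      fun t => Real.log t + Real.log (Real.Gamma t) := by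
    filter_upwards [lt_mem_nhds hx] with t ht
    rw [Real.Gamma_add_one ht.ne', Real.log_mul ht.ne' (Real.Gamma_pos_of_pos ht).ne']
  rw [h_shift.unique (h_sum.congr_of_eventuallyEq h_eq), add_comm]

lemma monotoneOn_digamma : MonotoneOn digamma (Ioi 0) :=
  (Real.convexOn_log_Gamma.monotoneOn_deriv
    fun _ hx => (hasDerivAt_log_Gamma hx).differentiableAt).congr
    fun _ hx => (hasDerivAt_log_Gamma hx).deriv

lemma digamma_add_natCast (hx : 0 < x) (n : ℕ) :
    digamma (x + n) = digamma x + ∑ k ∈ Finset.range n, 1 / (x + k) := by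
  induction n with
  | zero => simp
  | succ n ih =>
    rw [Nat.cast_succ, ← add_assoc, digamma_add_one (by positivity), ih, Finset.sum_range_succ,
      add_assoc]

-- Monotonicity squeezes `ψ (y + n) - ψ (x + n)` below `ψ (x + n + m) - ψ (x + n)` for any natural
-- `m ≥ y - x`, and that is a sum of `m` reciprocals tending to zero.
lemma tendsto_digamma_add_natCast_sub (hx : 0 < x) (hxy : x ≤ y) :
    Tendsto (fun n : ℕ => digamma (y + n) - digamma (x + n)) atTop (𝓝 0) := by
  obtain ⟨m, hm⟩ := exists_nat_ge (y - x)
  have h_bound : Tendsto (fun n : ℕ => ∑ k ∈ Finset.range m, 1 / (x + n + k)) atTop (𝓝 0) := by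
    rw [← Finset.sum_const_zero (s := Finset.range m)]
    refine tendsto_finsetSum _ fun k _ => ?_
    simp only [one_div]
    exact tendsto_inv_atTop_zero.comp <| tendsto_atTop_add_const_right _ _ <|
      tendsto_atTop_add_const_left _ _ tendsto_natCast_atTop_atTop
  have hpos (n : ℕ) : 0 < x + n := by positivity
  refine squeeze_zero (fun n => sub_nonneg.2 ?_) (fun n => ?_) h_bound
  · exact monotoneOn_digamma (hpos n) ((hpos n).trans_le (by gcongr)) (by gcongr)
  · rw [sub_le_iff_le_add', ← digamma_add_natCast (hpos n)]
    have h_le : y + n ≤ x + n + m := by linarith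
    exact monotoneOn_digamma ((hpos n).trans_le (by gcongr))
      ((hpos n).trans_le (le_add_of_nonneg_right m.cast_nonneg)) h_le

lemma hasSum_digamma_sub_of_le (hx : 0 < x) (hxy : x ≤ y) :
    HasSum (fun n : ℕ => 1 / (x + n) - 1 / (y + n)) (digamma y - digamma x) := by
  have hy := hx.trans_le hxy
  rw [hasSum_iff_tendsto_nat_of_nonneg fun n => sub_nonneg.2 (by gcongr)]
  have h_lim := (tendsto_digamma_add_natCast_sub hx hxy).const_sub (digamma y - digamma x)
  rw [sub_zero] at h_lim
  refine h_lim.congr fun n => ?_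
  rw [digamma_add_natCast hx, digamma_add_natCast hy, Finset.sum_sub_distrib]
  ring

lemma hasSum_digamma_sub (hx : 0 < x) (hy : 0 < y) :
    HasSum (fun n : ℕ => 1 / (x + n) - 1 / (y + n)) (digamma y - digamma x) := by
  rcases le_total x y with hxy | hyx
  · exact hasSum_digamma_sub_of_le hx hxy
  · simpa using (hasSum_digamma_sub_of_le hy hyx).neg

lemma summable_one_div_add_natCast_sq (x : ℝ) : Summable fun n : ℕ => 1 / (x + n) ^ 2 := by
  refine ((Real.summable_one_div_nat_add_rpow x 2).2 one_lt_two).congr fun n => ?_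
  rw [Real.rpow_two, sq_abs, add_comm]

lemma hasSum_trigamma (hx : 0 < x) : HasSum (fun n : ℕ => 1 / (x + n) ^ 2) (trigamma x) := by
  have h_term (n : ℕ) (y : ℝ) (hy : y ∈ Ioi (x / 2)) :
      HasDerivAt (fun t : ℝ => 1 / (x + n) - 1 / (t + n)) (1 / (y + n) ^ 2) y := by
    have hy_pos : 0 < y := (half_pos hx).trans hy
    have h_inv := ((hasDerivAt_id y).add_const (n : ℝ)).fun_inv (by positivity)
    simpa [neg_div] using h_inv.const_sub (1 / (x + n))
  have h_bound (n : ℕ) (y : ℝ) (hy : y ∈ Ioi (x / 2)) :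
      ‖1 / (y + n) ^ 2‖ ≤ 1 / (x / 2 + n) ^ 2 := by
    rw [Real.norm_of_nonneg (by positivity)]
    gcongr
    exact hy.le
  have hx_mem : x ∈ Ioi (x / 2) := half_lt_self hx
  have h_deriv : HasDerivAt (fun y => ∑' n : ℕ, (1 / (x + n) - 1 / (y + n)))
      (∑' n : ℕ, 1 / (x + n) ^ 2) x :=
    hasDerivAt_tsum_of_isPreconnected (summable_one_div_add_natCast_sq (x / 2)) isOpen_Ioi
      isPreconnected_Ioi h_term h_bound hx_mem (hasSum_digamma_sub hx hx).summable hx_mem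
  have h_series : digamma =ᶠ[𝓝 x]
      fun y => (∑' n : ℕ, (1 / (x + n) - 1 / (y + n))) + digamma x := by
    filter_upwards [lt_mem_nhds hx] with y hy
    rw [(hasSum_digamma_sub hx hy).tsum_eq, sub_add_cancel]
  rw [trigamma, ((h_deriv.add_const _).congr_of_eventuallyEq h_series).deriv]
  exact (summable_one_div_add_natCast_sq x).hasSum

lemma hasSum_neg_one_pow_div_add_natCast_sq (hx : 0 < x) :
    HasSum (fun n : ℕ => (-1) ^ n / (x + n) ^ 2)
      ((trigamma (x / 2) - trigamma ((x + 1) / 2)) / 4) := by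
  have h_even := (hasSum_trigamma (half_pos hx)).div_const 4
  have h_odd := ((hasSum_trigamma (half_pos (add_pos hx one_pos))).div_const 4).neg
  rw [sub_div, sub_eq_add_neg]
  refine HasSum.even_add_odd (h_even.congr_fun fun n => ?_) (h_odd.congr_fun fun n => ?_)
  · rw [pow_mul, neg_one_sq, one_pow, Nat.cast_mul, Nat.cast_ofNat, div_div]
    ring
  · rw [pow_succ, pow_mul, neg_one_sq, one_pow, div_div]
    push_cast
    ring

lemma hasDerivAt_beta_right {a b : ℝ} (ha : 0 < a) (hb : 0 < b) :
    HasDerivAt (beta a) (beta a b * (digamma b - digamma (a + b))) b := by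
  have hab := add_pos ha hb
  have hΓ := (Real.Gamma_pos_of_pos hab).ne'
  refine (((hasDerivAt_Gamma hb).const_mul (Real.Gamma a)).fun_div
    ((hasDerivAt_Gamma hab).comp_const_add a b) hΓ).congr_deriv ?_
  rw [beta]
  field_simp

end Digamma

section IntegralRpow

variable {α : Type*} [MeasurableSpace α] {μ : Measure α} {f : α → ℝ} {s : ℝ}

lemma rpow_ae_eq_exp_mul_log (hf : ∀ᵐ x ∂μ, 0 < f x) (t : ℝ) :
    (fun x => f x ^ t) =ᵐ[μ] fun x => Real.exp (t * Real.log (f x)) := by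
  filter_upwards [hf] with x hx
  rw [Real.rpow_def_of_pos hx, mul_comm]

-- `∫ f ^ t` is the moment generating function of `log f` at `t`, so it may be differentiated under
-- the integral sign without a separate domination argument.
lemma mem_interior_integrableExpSet_log (hf : ∀ᵐ x ∂μ, 0 < f x)
    (hs : ∀ᶠ t in 𝓝 s, Integrable (fun x => f x ^ t) μ) :
    s ∈ interior (integrableExpSet (fun x => Real.log (f x)) μ) := by
  rw [mem_interior_iff_mem_nhds]
  filter_upwards [hs] with t ht
  exact ht.congr (rpow_ae_eq_exp_mul_log hf t)

lemma integrable_log_mul_rpow (hf : ∀ᵐ x ∂μ, 0 < f x)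
    (hs : ∀ᶠ t in 𝓝 s, Integrable (fun x => f x ^ t) μ) :
    Integrable (fun x => Real.log (f x) * f x ^ s) μ := by
  have h := integrable_pow_mul_exp_of_mem_interior_integrableExpSet
    (mem_interior_integrableExpSet_log hf hs) 1
  simp only [pow_one] at h
  exact h.congr (((rpow_ae_eq_exp_mul_log hf s).symm).mono fun x hx => by simp only [hx])

lemma hasDerivAt_integral_rpow (hf : ∀ᵐ x ∂μ, 0 < f x)
    (hs : ∀ᶠ t in 𝓝 s, Integrable (fun x => f x ^ t) μ) :
    HasDerivAt (fun t => ∫ x, f x ^ t ∂μ) (∫ x, Real.log (f x) * f x ^ s ∂μ) s := by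
  have h := hasDerivAt_mgf (mem_interior_integrableExpSet_log hf hs)
  have h_mgf : mgf (fun x => Real.log (f x)) μ = fun t => ∫ x, f x ^ t ∂μ :=
    funext fun t => integral_congr_ae (rpow_ae_eq_exp_mul_log hf t).symm
  rw [h_mgf] at h
  refine h.congr_deriv (integral_congr_ae ?_)
  filter_upwards [rpow_ae_eq_exp_mul_log hf s] with x hx
  rw [hx]

end IntegralRpow

section ChangeOfVariables

variable {E : Type*} [NormedAddCommGroup E] [NormedSpace ℝ E] {c : ℝ}

lemma image_inv_Ioo_zero (hc : 0 < c) : (fun x : ℝ => x⁻¹) '' Ioo 0 c = Ioi c⁻¹ := by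
  rw [image_inv_eq_inv, inv_Ioo_0_left hc]

lemma hasDerivWithinAt_inv_Ioo_zero :
    ∀ x ∈ Ioo 0 c, HasDerivWithinAt (fun t : ℝ => t⁻¹) (-(x ^ 2)⁻¹) (Ioo 0 c) x :=
  fun _ hx => (hasDerivAt_inv hx.1.ne').hasDerivWithinAt

lemma antitoneOn_inv_Ioo_zero : AntitoneOn (fun x : ℝ => x⁻¹) (Ioo 0 c) :=
  fun _ hx _ _ hxy => inv_anti₀ hx.1 hxy

lemma integrableOn_comp_inv_Ioo_iff (g : ℝ → E) (hc : 0 < c) :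
    IntegrableOn (fun x => (x ^ 2)⁻¹ • g x⁻¹) (Ioo 0 c) ↔ IntegrableOn g (Ioi c⁻¹) := by
  rw [← image_inv_Ioo_zero hc, integrableOn_image_iff_integrableOn_deriv_smul_of_antitoneOn
    measurableSet_Ioo hasDerivWithinAt_inv_Ioo_zero antitoneOn_inv_Ioo_zero]
  simp only [neg_neg]

lemma integral_comp_inv_Ioo (g : ℝ → E) (hc : 0 < c) :
    ∫ x in Ioo 0 c, (x ^ 2)⁻¹ • g x⁻¹ = ∫ x in Ioi c⁻¹, g x := by
  rw [← image_inv_Ioo_zero hc, integral_image_eq_integral_deriv_smul_of_antitoneOn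
    measurableSet_Ioo hasDerivWithinAt_inv_Ioo_zero antitoneOn_inv_Ioo_zero]
  simp only [neg_neg]

lemma integrableOn_add_comp_inv {g : ℝ → E} (hg : IntegrableOn g (Ioi 0)) :
    IntegrableOn (fun x => g x + (x ^ 2)⁻¹ • g x⁻¹) (Ioo 0 1) :=
  (hg.mono_set Ioo_subset_Ioi_self).add <| (integrableOn_comp_inv_Ioo_iff g one_pos).2 <|
    hg.mono_set (Ioi_subset_Ioi (by positivity))

lemma integral_add_comp_inv {g : ℝ → E} (hg : IntegrableOn g (Ioi 0)) :
    ∫ x in Ioo 0 1, (g x + (x ^ 2)⁻¹ • g x⁻¹) = ∫ x in Ioi 0, g x := by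
  have h_tail : IntegrableOn g (Ioi 1) := hg.mono_set (Ioi_subset_Ioi zero_le_one)
  rw [integral_add (hg.mono_set Ioo_subset_Ioi_self)
      ((integrableOn_comp_inv_Ioo_iff g one_pos).2 (by rwa [inv_one])),
    integral_comp_inv_Ioo g one_pos, inv_one, ← integral_Ioc_eq_integral_Ioo,
    ← setIntegral_union Ioc_disjoint_Ioi_same measurableSet_Ioi (hg.mono_set Ioc_subset_Ioi_self)
      h_tail, Ioc_union_Ioi_eq_Ioi zero_le_one]

end ChangeOfVariables

section Beta

variable {a b q s : ℝ}

lemma integral_rpow_mul_one_sub_rpow (ha : 0 < a) (hb : 0 < b) :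
    ∫ x in Ioo (0 : ℝ) 1, x ^ (a - 1) * (1 - x) ^ (b - 1) = beta a b := by
  have h_ofReal : Complex.betaIntegral a b =
      ∫ x in Ioo (0 : ℝ) 1, ((x ^ (a - 1) * (1 - x) ^ (b - 1) : ℝ) : ℂ) := by
    rw [Complex.betaIntegral, intervalIntegral.integral_of_le zero_le_one,
      integral_Ioc_eq_integral_Ioo]
    refine setIntegral_congr_fun measurableSet_Ioo fun x hx => ?_
    rw [Complex.ofReal_mul, Complex.ofReal_cpow hx.1.le, Complex.ofReal_cpow (sub_nonneg.2 hx.2.le)]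
    push_cast
    rfl
  rw [beta_eq_betaIntegralReal a b ha hb, h_ofReal, integral_complex_ofReal, Complex.ofReal_re]

lemma image_div_add_one_Ioi : (fun t : ℝ => t / (t + 1)) '' Ioi 0 = Ioo 0 1 := by
  ext u
  constructor
  · rintro ⟨t, ht : 0 < t, rfl⟩
    exact ⟨by positivity, (div_lt_one (by positivity)).2 (lt_add_one t)⟩
  · rintro ⟨hu_pos, hu_lt⟩
    have hu : 0 < 1 - u := sub_pos.2 hu_lt
    refine ⟨u / (1 - u), div_pos hu_pos hu, ?_⟩
    field_simp
    ring

lemma integral_rpow_mul_add_one_rpow (ha : 0 < a) (hb : 0 < b) :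
    ∫ t in Ioi (0 : ℝ), t ^ (a - 1) * (t + 1) ^ (-(a + b)) = beta a b := by
  have h_deriv (t : ℝ) (ht : t ∈ Ioi 0) :
      HasDerivWithinAt (fun t => t / (t + 1)) (1 / (t + 1) ^ 2) (Ioi 0) t := by
    have ht_pos : 0 < t := ht
    have h := (hasDerivAt_id t).fun_div ((hasDerivAt_id t).add_const 1) (by positivity)
    simpa using h.hasDerivWithinAt
  have h_mono : MonotoneOn (fun t : ℝ => t / (t + 1)) (Ioi 0) := by
    intro t ht u hu htu
    have ht_pos : 0 < t := ht
    have hu_pos : 0 < u := hu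
    rw [div_le_div_iff₀ (by positivity) (by positivity)]
    linarith
  rw [← integral_rpow_mul_one_sub_rpow ha hb, ← image_div_add_one_Ioi,
    integral_image_eq_integral_deriv_smul_of_monotoneOn measurableSet_Ioi h_deriv h_mono]
  refine setIntegral_congr_fun measurableSet_Ioi fun t (ht : 0 < t) => ?_
  have ht_add : 0 < t + 1 := by positivity
  have h_compl : 1 - t / (t + 1) = (t + 1)⁻¹ := by
    field_simp
    ring
  simp only [smul_eq_mul, h_compl]
  rw [Real.div_rpow ht.le ht_add.le, Real.inv_rpow ht_add.le, Real.rpow_neg ht_add.le,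
    Real.rpow_sub_one ht_add.ne', Real.rpow_sub_one ht_add.ne', Real.rpow_add ht_add]
  field_simp

lemma integral_rpow_add_one_rpow (hq : 0 < q) (hs : 1 / q < s) :
    ∫ x in Ioi (0 : ℝ), (x ^ q + 1) ^ (-s) = beta (1 / q) (s - 1 / q) / q := by
  have h_beta := integral_rpow_mul_add_one_rpow (one_div_pos.2 hq) (sub_pos.2 hs)
  rw [add_sub_cancel, ← integral_comp_rpow_Ioi _ hq.ne'] at h_beta
  rw [← h_beta, eq_div_iff hq.ne', mul_comm, ← integral_const_mul]
  refine setIntegral_congr_fun measurableSet_Ioi fun x (hx : 0 < x) => ?_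
  have h_cancel : x ^ (q - 1) * (x ^ q) ^ (1 / q - 1) = 1 := by
    rw [← Real.rpow_mul hx.le, ← Real.rpow_add hx, mul_sub, mul_one_div_cancel hq.ne']
    simp
  rw [smul_eq_mul, abs_of_pos hq, mul_assoc, ← mul_assoc (x ^ (q - 1)), h_cancel, one_mul]

lemma integrableOn_rpow_add_one_rpow (hq : 0 < q) (hs : 1 / q < s) :
    IntegrableOn (fun x : ℝ => (x ^ q + 1) ^ (-s)) (Ioi 0) := by
  -- A non-integrable function has integral `0` by convention, whereas the beta value is positive.
  refine not_imp_comm.1 integral_undef ?_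
  rw [integral_rpow_add_one_rpow hq hs]
  exact (div_pos (beta_pos (one_div_pos.2 hq) (sub_pos.2 hs)) hq).ne'

lemma rpow_add_one_ae_pos (q : ℝ) : ∀ᵐ x ∂volume.restrict (Ioi (0 : ℝ)), 0 < x ^ q + 1 := by
  filter_upwards [ae_restrict_mem measurableSet_Ioi] with x (hx : 0 < x)
  positivity

lemma eventually_integrableOn_rpow_add_one_rpow (hq : 0 < q) (hs : 1 / q < s) :
    ∀ᶠ t in 𝓝 (-s), IntegrableOn (fun x : ℝ => (x ^ q + 1) ^ t) (Ioi 0) := by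
  filter_upwards [gt_mem_nhds (neg_lt_neg hs)] with t ht
  simpa using integrableOn_rpow_add_one_rpow hq (lt_neg_of_lt_neg ht)

lemma integrableOn_log_mul_rpow_add_one_rpow (hq : 0 < q) (hs : 1 / q < s) :
    IntegrableOn (fun x : ℝ => Real.log (x ^ q + 1) * (x ^ q + 1) ^ (-s)) (Ioi 0) :=
  integrable_log_mul_rpow (rpow_add_one_ae_pos q) (eventually_integrableOn_rpow_add_one_rpow hq hs)

lemma integral_log_mul_rpow_add_one_rpow (hq : 0 < q) (hs : 1 / q < s) :
    ∫ x in Ioi (0 : ℝ), Real.log (x ^ q + 1) * (x ^ q + 1) ^ (-s) =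
      beta (1 / q) (s - 1 / q) / q * (digamma s - digamma (s - 1 / q)) := by
  have h_integral := hasDerivAt_integral_rpow (rpow_add_one_ae_pos q)
    (eventually_integrableOn_rpow_add_one_rpow hq hs)
  have h_beta : HasDerivAt (fun t => beta (1 / q) (-t - 1 / q) / q)
      (beta (1 / q) (s - 1 / q) / q * (digamma s - digamma (s - 1 / q))) (-s) := by
    have h_comp := (hasDerivAt_beta_right (one_div_pos.2 hq) (sub_pos.2 hs)).comp_of_eq (-s)
      ((hasDerivAt_neg (-s)).sub_const (1 / q)) (by rw [neg_neg])
    refine (h_comp.div_const q).congr_deriv ?_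
    rw [add_sub_cancel]
    ring
  refine h_integral.unique (h_beta.congr_of_eventuallyEq ?_)
  filter_upwards [gt_mem_nhds (neg_lt_neg hs)] with t ht
  simpa using integral_rpow_add_one_rpow hq (lt_neg_of_lt_neg ht)

end Beta

section LogSeries

variable {q r : ℝ}

lemma eventually_integrableOn_rpow_Ioo (hr : -1 < r) :
    ∀ᶠ t in 𝓝 r, IntegrableOn (fun x : ℝ => x ^ t) (Ioo 0 1) := by
  filter_upwards [lt_mem_nhds hr] with t ht
  exact (intervalIntegral.integrableOn_Ioo_rpow_iff one_pos).2 ht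

lemma integrableOn_log_mul_rpow (hr : -1 < r) :
    IntegrableOn (fun x : ℝ => Real.log x * x ^ r) (Ioo 0 1) :=
  integrable_log_mul_rpow (ae_restrict_of_forall_mem measurableSet_Ioo fun _ hx => hx.1)
    (eventually_integrableOn_rpow_Ioo hr)

lemma integral_log_mul_rpow (hr : -1 < r) :
    ∫ x in Ioo (0 : ℝ) 1, Real.log x * x ^ r = -(1 / (r + 1) ^ 2) := by
  have hr_add : r + 1 ≠ 0 := by linarith
  have h_integral := hasDerivAt_integral_rpow
    (ae_restrict_of_forall_mem measurableSet_Ioo fun _ hx => hx.1)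
    (eventually_integrableOn_rpow_Ioo hr)
  have h_inv : HasDerivAt (fun t : ℝ => (t + 1)⁻¹) (-(1 / (r + 1) ^ 2)) r := by
    simpa [neg_div] using ((hasDerivAt_id r).add_const 1).fun_inv hr_add
  refine h_integral.unique (h_inv.congr_of_eventuallyEq ?_)
  filter_upwards [lt_mem_nhds hr] with t ht
  have ht_add : t + 1 ≠ 0 := by linarith
  rw [← integral_Ioc_eq_integral_Ioo, ← intervalIntegral.integral_of_le zero_le_one,
    integral_rpow (Or.inl ht), Real.one_rpow, Real.zero_rpow ht_add, sub_zero, one_div]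

lemma integral_norm_log_mul_rpow (hr : -1 < r) :
    ∫ x in Ioo (0 : ℝ) 1, ‖Real.log x * x ^ r‖ = 1 / (r + 1) ^ 2 := by
  rw [← neg_neg (1 / (r + 1) ^ 2), ← integral_log_mul_rpow hr, ← integral_neg]
  refine setIntegral_congr_fun measurableSet_Ioo fun x hx => Real.norm_of_nonpos ?_
  exact mul_nonpos_of_nonpos_of_nonneg (Real.log_nonpos hx.1.le hx.2.le)
    (Real.rpow_nonneg hx.1.le r)

lemma integrableOn_log_mul_rpow_div_rpow_add_one (hr : -1 < r) (q : ℝ) :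
    IntegrableOn (fun x : ℝ => Real.log x * x ^ r / (x ^ q + 1)) (Ioo 0 1) := by
  have h_meas : Measurable fun x : ℝ => Real.log x * x ^ r / (x ^ q + 1) := by fun_prop
  refine Integrable.mono (integrableOn_log_mul_rpow hr) h_meas.aestronglyMeasurable ?_
  filter_upwards [ae_restrict_mem measurableSet_Ioo] with x hx
  have hxq := Real.rpow_pos_of_pos hx.1 q
  rw [norm_div, Real.norm_of_nonneg (by positivity : 0 ≤ x ^ q + 1)]
  exact div_le_self (norm_nonneg _) (by linarith)

lemma tsum_log_mul_rpow_add_mul_natCast (hq : 0 < q) (r : ℝ) {x : ℝ} (hx : x ∈ Ioo 0 1) :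
    ∑' n : ℕ, (-1) ^ n * (Real.log x * x ^ (r + q * n)) =
      Real.log x * x ^ r / (x ^ q + 1) := by
  have hxq : |-(x ^ q)| < 1 := by
    rw [abs_neg, abs_of_pos (Real.rpow_pos_of_pos hx.1 q)]
    exact Real.rpow_lt_one hx.1.le hx.2 hq
  have h_term (n : ℕ) : (-1) ^ n * (Real.log x * x ^ (r + q * n)) =
      Real.log x * x ^ r * (-(x ^ q)) ^ n := by
    rw [Real.rpow_add hx.1, Real.rpow_mul_natCast hx.1.le, neg_pow (x ^ q)]
    ring
  rw [tsum_congr h_term, tsum_mul_left, tsum_geometric_of_abs_lt_one hxq, sub_neg_eq_add, add_comm,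
    div_eq_mul_inv]

lemma integral_log_mul_rpow_div_rpow_add_one (hr : -1 < r) (hq : 0 < q) :
    ∫ x in Ioo (0 : ℝ) 1, Real.log x * x ^ r / (x ^ q + 1) =
      (trigamma (((r + 1) / q + 1) / 2) - trigamma ((r + 1) / q / 2)) / (4 * q ^ 2) := by
  have hr_pos : 0 < (r + 1) / q := div_pos (by linarith) hq
  have h_exponent (n : ℕ) : -1 < r + q * n := hr.trans_le (le_add_of_nonneg_right (by positivity))
  have h_scale (n : ℕ) : 1 / (r + q * n + 1) ^ 2 = 1 / q ^ 2 * (1 / ((r + 1) / q + n) ^ 2) := by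
    have h_factor : r + q * n + 1 = q * ((r + 1) / q + n) := by
      field_simp
      ring
    rw [h_factor, mul_pow, one_div_mul_one_div]
  have h_summable : Summable fun n : ℕ =>
      ∫ x in Ioo (0 : ℝ) 1, ‖(-1) ^ n * (Real.log x * x ^ (r + q * n))‖ := by
    simp only [norm_mul ((-1 : ℝ) ^ (_ : ℕ)), norm_pow, norm_neg, norm_one, one_pow, one_mul,
      integral_norm_log_mul_rpow (h_exponent _), h_scale]
    exact (summable_one_div_add_natCast_sq _).mul_left _
  have h_sum := hasSum_integral_of_summable_integral_norm
    (fun n : ℕ => (integrableOn_log_mul_rpow (h_exponent n)).const_mul ((-1) ^ n)) h_summable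
  rw [setIntegral_congr_fun measurableSet_Ioo
    fun x hx => tsum_log_mul_rpow_add_mul_natCast hq r hx] at h_sum
  simp only [integral_const_mul, integral_log_mul_rpow (h_exponent _), h_scale] at h_sum
  have h_alternating :=
    (hasSum_neg_one_pow_div_add_natCast_sq hr_pos).mul_left (-(1 / q ^ 2))
  rw [h_sum.unique (h_alternating.congr_fun fun n => by ring)]
  field_simp
  ring

end LogSeries

lemma log_inv_rpow_add_one {q x : ℝ} (hx : 0 < x) :
    Real.log (x⁻¹ ^ q + 1) = Real.log (x ^ q + 1) - q * Real.log x := by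
  have hxq := Real.rpow_pos_of_pos hx q
  have h_div : x⁻¹ ^ q + 1 = (x ^ q + 1) / x ^ q := by
    rw [Real.inv_rpow hx.le]
    field_simp
    ring
  rw [h_div, Real.log_div (by positivity) hxq.ne', Real.log_rpow hx]

lemma log_rpow_add_one_eq_fold {q x : ℝ} (hx : 0 < x) :
    (x ^ (q - 2) + 1) * Real.log (x ^ q + 1) / (x ^ q + 1) =
      (Real.log (x ^ q + 1) / (x ^ q + 1) +
        (x ^ 2)⁻¹ • (Real.log (x⁻¹ ^ q + 1) / (x⁻¹ ^ q + 1))) +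
        q * (Real.log x * x ^ (q - 2) / (x ^ q + 1)) := by
  rw [log_inv_rpow_add_one hx, Real.inv_rpow hx.le, Real.rpow_sub hx, Real.rpow_two, smul_eq_mul]
  field_simp
  ring

lemma beta_one_sub (x : ℝ) : beta x (1 - x) = Real.pi / Real.sin (Real.pi * x) := by
  rw [beta, add_sub_cancel, Real.Gamma_one, div_one, Real.Gamma_mul_Gamma_one_sub]

theorem integral_log_rpow_one (q : ℝ) (hq : 1 < q) :
    (∫ x in (0:ℝ)..1, (x ^ (q - 2) + 1) * Real.log (x ^ q + 1) / (x ^ q + 1)) =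
      (1 / (4 * q)) * (trigamma ((2 * q - 1) / (2 * q)) - trigamma ((q - 1) / (2 * q)))
      - (Real.pi / (q * Real.sin (Real.pi / q))) * (digamma (1 - 1 / q) - digamma 1) := by
  have hq_pos : 0 < q := one_pos.trans hq
  have hq_inv : 1 / q < 1 := (div_lt_one hq_pos).2 hq
  have hr : -1 < q - 2 := by linarith
  have h_integrable := integrableOn_log_mul_rpow_add_one_rpow hq_pos hq_inv
  have h_halfLine := integral_log_mul_rpow_add_one_rpow hq_pos hq_inv
  simp only [Real.rpow_neg_one, ← div_eq_mul_inv] at h_integrable h_halfLine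
  have h_odd : ((q - 2 + 1) / q + 1) / 2 = (2 * q - 1) / (2 * q) := by field_simp; ring
  have h_even : (q - 2 + 1) / q / 2 = (q - 1) / (2 * q) := by field_simp; ring
  rw [intervalIntegral.integral_of_le zero_le_one, integral_Ioc_eq_integral_Ioo,
    setIntegral_congr_fun measurableSet_Ioo fun x hx => log_rpow_add_one_eq_fold hx.1,
    integral_add (integrableOn_add_comp_inv h_integrable)
      ((integrableOn_log_mul_rpow_div_rpow_add_one hr q).const_mul q),
    integral_add_comp_inv h_integrable, h_halfLine, integral_const_mul,
    integral_log_mul_rpow_div_rpow_add_one hr hq_pos, beta_one_sub, h_odd, h_even,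
    mul_one_div, div_div, mul_comm _ q]
  field_simp
  ring
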